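/- Let α, β : I_M → Y be paths in a digital image Y ⊆ ℤⁿ with α(0) = β(0) = y₀ and α(M) = β(M) = y_M, let k ≥ 1, and let α̂, β̂ : I_L → S(Y, 2k+1), L = (2k+1)M+2k, be their standard covers. Then α̂(0) = β̂(0) = ȳ₀ and α̂(L) = β̂(L) = ȳ_M, and if α and β are homotopic rel endpoints, then α̂ and β̂ are homotopic rel endpoints. -/

import Mathlib

open Set

/-- Adjacency of points in `ℤⁿ`: all coordinates differ by at most 1. -/
def adj {n : ℕ} (x y : Fin n → ℤ) : Prop := ∀ i, |x i - y i| ≤ 1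

/-- The `k`-subdivision of a digital image `X ⊆ ℤⁿ`. -/
def Subdiv {n : ℕ} (X : Set (Fin n → ℤ)) (k : ℤ) : Set (Fin n → ℤ) :=
  { y | (fun i => (y i).fdiv k) ∈ X }

/-- The standard projection `ρ_k`, coordinatewise floor-division by `k`. -/
def rho {n : ℕ} (k : ℤ) (y : Fin n → ℤ) : Fin n → ℤ := fun i => (y i).fdiv k

/-- The centre `ī = (2k+1)i + k` of `S(i, 2k+1) ⊆ ℤ`. -/
def bar (k i : ℤ) : ℤ := (2 * k + 1) * i + k

/-- The centre `ȳ = (2k+1)y + (k,…,k)` of `S(y, 2k+1) ⊆ ℤⁿ`. -/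
def barPt {n : ℕ} (k : ℤ) (y : Fin n → ℤ) : Fin n → ℤ := fun i => (2 * k + 1) * y i + k

/-- The standard cover `α̂ : I_{(2k+1)N+2k} → ℤⁿ` of a path `α : I_N → Y ⊆ ℤⁿ`,
with respect to the odd subdivision factor `2k+1`:
`α̂(j) = \overline{α(0)}` for `0 ≤ j ≤ k-1`;
`α̂(ī + t) = \overline{α(i)} + t (α(i+1) - α(i))` for `0 ≤ i ≤ N-1`, `0 ≤ t ≤ 2k`
(here `j = ī + t` has `i = (j-k) div (2k+1)` and `t = (j-k) mod (2k+1)`);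
`α̂(j) = \overline{α(N)}` for `(2k+1)N + k ≤ j`. -/
def cover {n : ℕ} (k N : ℤ) (α : ℤ → Fin n → ℤ) (j : ℤ) : Fin n → ℤ :=
  if j ≤ k - 1 then barPt k (α 0)
  else if (2 * k + 1) * N + k ≤ j then barPt k (α N)
  else fun i =>
    barPt k (α ((j - k).fdiv (2 * k + 1))) i
      + ((j - k) % (2 * k + 1)) *
          (α ((j - k).fdiv (2 * k + 1) + 1) i - α ((j - k).fdiv (2 * k + 1)) i)


/-- `HomotopicRel M Y y₀ yM f g`: maps `f, g : I_M → Y` with common endpoints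
`y₀, yM` are homotopic rel endpoints. -/
def HomotopicRel {n : ℕ} (M : ℤ) (Y : Set (Fin n → ℤ)) (y₀ yM : Fin n → ℤ)
    (f g : ℤ → Fin n → ℤ) : Prop :=
  ∃ N : ℤ, 1 ≤ N ∧ ∃ H : ℤ → ℤ → Fin n → ℤ,
    (∀ x ∈ Icc (0 : ℤ) M, ∀ t ∈ Icc (0 : ℤ) N, H x t ∈ Y) ∧
    (∀ x ∈ Icc (0 : ℤ) M, ∀ t ∈ Icc (0 : ℤ) N,
      ∀ x' ∈ Icc (0 : ℤ) M, ∀ t' ∈ Icc (0 : ℤ) N,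
      |x - x'| ≤ 1 → |t - t'| ≤ 1 → adj (H x t) (H x' t')) ∧
    (∀ x ∈ Icc (0 : ℤ) M, H x 0 = f x) ∧
    (∀ x ∈ Icc (0 : ℤ) M, H x N = g x) ∧
    (∀ t ∈ Icc (0 : ℤ) N, H 0 t = y₀) ∧
    (∀ t ∈ Icc (0 : ℤ) N, H M t = yM)

/-!
Put `K = 2k + 1`. A standard cover is a moving sum,
`α̂(j) = (k, …, k) + ∑_{|r| ≤ k} α(⌊(j + r)/K⌋)`, with `α` constant on each side of `I_M`. Since
`∑_{|r| ≤ k} ⌊(j + r)/K⌋ = j - k`, comparing two such sums term by term shows that the covers of the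
rows `H(·, T)` of a homotopy, placed at the heights `K T`, together form a map that is 1-Lipschitz
for the sup metric. It stays 1-Lipschitz when the constant values on the two vertical sides are
added. McShane's extension theorem (over `ℝ`, followed by rounding down, which is harmless because
distances in `ℤ²` are integers) fills in the remaining points. The Lipschitz bound alone keeps the
extension in the subdivision: every point of `ℤ²` is within `k` of some `(ī, K T)`, where the value
is `\overline{H(i, T)}`.
-/

section Metric

theorem adj_iff_dist_le_one {n : ℕ} {x y : Fin n → ℤ} : adj x y ↔ dist x y ≤ 1 := by
  simp only [adj, dist_pi_le_iff zero_le_one, Int.dist_eq]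
  exact_mod_cast Iff.rfl

theorem dist_eq_intCast_max (p q : ℤ × ℤ) :
    dist p q = ((max |p.1 - q.1| |p.2 - q.2| : ℤ) : ℝ) := by
  simp [Prod.dist_eq, Int.dist_eq]

theorem dist_le_intCast_iff {p q : ℤ × ℤ} {m : ℤ} :
    dist p q ≤ m ↔ |p.1 - q.1| ≤ m ∧ |p.2 - q.2| ≤ m := by
  rw [dist_eq_intCast_max, Int.cast_le, max_le_iff]

theorem exists_dist_le_one_dist_le {p q : ℤ × ℤ} {m : ℤ} (hm : 0 ≤ m)
    (hpq : dist p q ≤ (m + 1 : ℤ)) : ∃ z, dist p z ≤ (1 : ℤ) ∧ dist z q ≤ m := by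
  have step_toward (x y : ℤ) (h : |x - y| ≤ m + 1) : ∃ z, |x - z| ≤ 1 ∧ |z - y| ≤ m :=
    ⟨max (x - 1) (min y (x + 1)), by simp only [abs_le] at *; omega⟩
  rw [dist_le_intCast_iff] at hpq
  obtain ⟨z₁, hpz₁, hzq₁⟩ := step_toward _ _ hpq.1
  obtain ⟨z₂, hpz₂, hzq₂⟩ := step_toward _ _ hpq.2
  exact ⟨(z₁, z₂), dist_le_intCast_iff.mpr ⟨hpz₁, hpz₂⟩, dist_le_intCast_iff.mpr ⟨hzq₁, hzq₂⟩⟩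

theorem lipschitzWith_one_of_dist_le_one {E : Type*} [PseudoMetricSpace E] {f : ℤ × ℤ → E}
    (hf : ∀ p q, dist p q ≤ 1 → dist (f p) (f q) ≤ 1) : LipschitzWith 1 f := by
  have chain (m : ℤ) (hm : 0 ≤ m) : ∀ p q : ℤ × ℤ, dist p q ≤ m → dist (f p) (f q) ≤ m := by
    induction m, hm using Int.leInduction with
    | base =>
      intro p q hpq
      rw [Int.cast_zero] at hpq
      rw [dist_le_zero.mp hpq, dist_self, Int.cast_zero]
    | succ m hm ih =>
      intro p q hpq
      obtain ⟨z, hpz, hzq⟩ := exists_dist_le_one_dist_le hm hpq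
      rw [Int.cast_one] at hpz
      calc dist (f p) (f q) ≤ dist (f p) (f z) + dist (f z) (f q) := dist_triangle _ _ _
        _ ≤ 1 + m := add_le_add (hf p z hpz) (ih z q hzq)
        _ = (m + 1 : ℤ) := by push_cast; ring
  refine LipschitzWith.of_dist_le_mul fun p q => ?_
  rw [NNReal.coe_one, one_mul, dist_eq_intCast_max p q]
  exact chain _ (le_max_of_le_left (abs_nonneg _)) p q (dist_eq_intCast_max p q).le

theorem dist_floor_le {a b : ℝ} {d : ℤ} (h : dist a b ≤ d) : dist ⌊a⌋ ⌊b⌋ ≤ d := by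
  rw [Real.dist_eq, abs_sub_le_iff] at h
  have hab : ⌊a⌋ ≤ ⌊b⌋ + d := by
    rw [← Int.floor_add_intCast]
    exact Int.floor_le_floor (by linarith)
  have hba : ⌊b⌋ ≤ ⌊a⌋ + d := by
    rw [← Int.floor_add_intCast]
    exact Int.floor_le_floor (by linarith)
  rw [Int.dist_eq, ← Int.cast_sub, ← Int.cast_abs, Int.cast_le, abs_sub_le_iff]
  omega

theorem exists_lipschitzWith_eqOn_of_int_dist {X ι : Type*} [PseudoMetricSpace X] [Fintype ι]
    (hX : ∀ x y : X, ∃ d : ℤ, dist x y = d) {f : X → ι → ℤ} {s : Set X}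
    (hf : LipschitzOnWith 1 f s) : ∃ g : X → ι → ℤ, LipschitzWith 1 g ∧ EqOn f g s := by
  have hf_real : LipschitzOnWith 1 (fun x i => (f x i : ℝ)) s :=
    LipschitzOnWith.of_dist_le_mul fun x hx y hy => hf.dist_le_mul x hx y hy
  obtain ⟨g, hg, hfg⟩ := hf_real.extend_pi
  refine ⟨fun x i => ⌊g x i⌋, LipschitzWith.of_dist_le_mul fun x y => ?_, fun x hx => ?_⟩
  · obtain ⟨d, hd⟩ := hX x y
    have hgd : dist (g x) (g y) ≤ d := by simpa [hd] using hg.dist_le_mul x y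
    rw [NNReal.coe_one, one_mul, hd]
    exact (dist_pi_le_iff (dist_nonneg.trans hgd)).mpr fun i =>
      dist_floor_le ((dist_le_pi_dist _ _ i).trans hgd)
  · funext i
    simp [← congrFun (hfg hx) i]

end Metric

section WindowSum

variable {k : ℤ}

theorem sum_Icc_neg_const {E : Type*} [AddCommGroup E] (hk : 0 ≤ k) (e : E) :
    ∑ _r ∈ Finset.Icc (-k) k, e = (2 * k + 1) • e := by
  rw [Finset.sum_const, Int.card_Icc, ← natCast_zsmul, Int.toNat_of_nonneg (by omega)]
  congr 1
  ring

theorem sum_comp_ediv {E : Type*} [AddCommGroup E] (hk : 0 ≤ k) (f : ℤ → E) (x : ℤ) :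
    ∑ r ∈ Finset.Icc (-k) k, f ((x + r) / (2 * k + 1)) =
      (2 * k + 1 - (x - k) % (2 * k + 1)) • f ((x - k) / (2 * k + 1)) +
        ((x - k) % (2 * k + 1)) • f ((x - k) / (2 * k + 1) + 1) := by
  have hK : 0 < 2 * k + 1 := by omega
  have hdecomp := Int.mul_ediv_add_emod (x - k) (2 * k + 1)
  have ht_nonneg := Int.emod_nonneg (x - k) hK.ne'
  have ht_lt := Int.emod_lt_of_pos (x - k) hK
  set i := (x - k) / (2 * k + 1)
  set t := (x - k) % (2 * k + 1)
  have hterm : ∀ r ∈ Finset.Icc (-k) k,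
      f ((x + r) / (2 * k + 1)) = if r ≤ k - t then f i else f (i + 1) := by
    intro r hr
    rw [Finset.mem_Icc] at hr
    rw [← apply_ite f]
    congr 1
    rw [Int.ediv_eq_iff_of_pos hK]
    split_ifs <;> constructor <;> linarith
  have hlow : {r ∈ Finset.Icc (-k) k | r ≤ k - t} = Finset.Icc (-k) (k - t) := by
    ext r
    simp only [Finset.mem_filter, Finset.mem_Icc]
    omega
  have hhigh : {r ∈ Finset.Icc (-k) k | ¬ r ≤ k - t} = Finset.Icc (k - t + 1) k := by
    ext r
    simp only [Finset.mem_filter, Finset.mem_Icc]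
    omega
  rw [Finset.sum_congr rfl hterm, Finset.sum_ite, hlow, hhigh]
  simp only [Finset.sum_const, Int.card_Icc, ← natCast_zsmul]
  congr 2 <;> omega

theorem sum_add_ediv (hk : 0 ≤ k) (x : ℤ) :
    ∑ r ∈ Finset.Icc (-k) k, (x + r) / (2 * k + 1) = x - k := by
  rw [sum_comp_ediv hk fun i => i]
  linear_combination Int.mul_ediv_add_emod (x - k) (2 * k + 1)

theorem add_mul_ediv_le_ediv {K x y m : ℤ} (hK : 0 < K) (h : x + K * m ≤ y) :
    x / K + m ≤ y / K := by
  rw [← Int.add_mul_ediv_left x m hK.ne']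
  exact Int.ediv_le_ediv hK h

theorem sum_max_abs_sub_ediv_le (hk : 0 ≤ k) (x y m : ℤ) :
    ∑ r ∈ Finset.Icc (-k) k, max |(x + r) / (2 * k + 1) - (y + r) / (2 * k + 1)| m ≤
      max |x - y| ((2 * k + 1) * m) := by
  wlog hxy : x ≤ y generalizing x y
  · simpa only [abs_sub_comm] using this y x (le_of_not_ge hxy)
  have hK : 0 < 2 * k + 1 := by omega
  have habs (r : ℤ) : |(x + r) / (2 * k + 1) - (y + r) / (2 * k + 1)| =
      (y + r) / (2 * k + 1) - (x + r) / (2 * k + 1) := by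
    rw [abs_sub_comm, abs_of_nonneg (sub_nonneg.mpr (Int.ediv_le_ediv hK (by omega)))]
  simp only [habs]
  rcases le_total (x + (2 * k + 1) * m) y with hfar | hnear
  · calc ∑ r ∈ Finset.Icc (-k) k, max ((y + r) / (2 * k + 1) - (x + r) / (2 * k + 1)) m
        = ∑ r ∈ Finset.Icc (-k) k, ((y + r) / (2 * k + 1) - (x + r) / (2 * k + 1)) := by
          refine Finset.sum_congr rfl fun r _ => max_eq_left ?_
          have : (x + r) / (2 * k + 1) + m ≤ (y + r) / (2 * k + 1) :=
            add_mul_ediv_le_ediv hK (by linarith)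
          omega
      _ = y - x := by
          rw [Finset.sum_sub_distrib, sum_add_ediv hk, sum_add_ediv hk]
          ring
      _ ≤ |x - y| := by rw [abs_sub_comm]; exact le_abs_self _
      _ ≤ _ := le_max_left _ _
  · calc ∑ r ∈ Finset.Icc (-k) k, max ((y + r) / (2 * k + 1) - (x + r) / (2 * k + 1)) m
        ≤ ∑ _r ∈ Finset.Icc (-k) k, m := by
          refine Finset.sum_le_sum fun r _ => max_le ?_ le_rfl
          have : (y + r) / (2 * k + 1) + -m ≤ (x + r) / (2 * k + 1) :=
            add_mul_ediv_le_ediv hK (by linarith)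
          omega
      _ = (2 * k + 1) * m := by rw [sum_Icc_neg_const hk, smul_eq_mul]
      _ ≤ _ := le_max_right _ _

end WindowSum

/-- The standard cover of a path `f : ℤ → ℤⁿ` without endpoints. Linear interpolation between
block centres is written as the sum of `f ∘ ρ` over the window of radius `k` around `j`. -/
noncomputable def lineCover {ι : Type*} (k : ℤ) (f : ℤ → ι → ℤ) (j : ℤ) : ι → ℤ :=
  ∑ r ∈ Finset.Icc (-k) k, f ((j + r) / (2 * k + 1)) + fun _ => k

section Cover

variable {n : ℕ} {k M : ℤ} {Y : Set (Fin n → ℤ)}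

theorem lineCover_eq_barPt (hk : 0 ≤ k) {f : ℤ → Fin n → ℤ} {j : ℤ} {y : Fin n → ℤ}
    (hf : ∀ r ∈ Finset.Icc (-k) k, f ((j + r) / (2 * k + 1)) = y) :
    lineCover k f j = barPt k y := by
  funext i
  rw [lineCover, Finset.sum_congr rfl hf, sum_Icc_neg_const hk]
  rfl

theorem lineCover_bar (hk : 0 ≤ k) (f : ℤ → Fin n → ℤ) (i : ℤ) :
    lineCover k f (bar k i) = barPt k (f i) := by
  refine lineCover_eq_barPt hk fun r hr => ?_
  rw [Finset.mem_Icc] at hr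
  congr 1
  rw [Int.ediv_eq_iff_of_pos (by omega), bar]
  constructor <;> linarith

theorem lineCover_of_le {j a : ℤ} (hk : 0 ≤ k) (hj : j ≤ bar k a) {f : ℤ → Fin n → ℤ}
    {y : Fin n → ℤ} (hf : ∀ i ≤ a, f i = y) :
    lineCover k f j = barPt k y := by
  refine lineCover_eq_barPt hk fun r hr => hf _ ?_
  rw [Finset.mem_Icc] at hr
  rw [bar] at hj
  rw [← Int.lt_add_one_iff, Int.ediv_lt_iff_lt_mul (by omega)]
  linarith

theorem lineCover_of_ge {j b : ℤ} (hk : 0 ≤ k) (hj : bar k b ≤ j) {f : ℤ → Fin n → ℤ}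
    {y : Fin n → ℤ} (hf : ∀ i ≥ b, f i = y) :
    lineCover k f j = barPt k y := by
  refine lineCover_eq_barPt hk fun r hr => hf _ ?_
  rw [Finset.mem_Icc] at hr
  rw [bar] at hj
  rw [ge_iff_le, Int.le_ediv_iff_mul_le (by omega)]
  linarith

theorem cover_eq_lineCover (hk : 0 ≤ k) (hM : 0 ≤ M) (α : ℤ → Fin n → ℤ) :
    cover k M α = lineCover k fun i => α (projIcc 0 M hM i) := by
  have hK : 0 < 2 * k + 1 := by omega
  funext j
  unfold cover
  split_ifs with hleft hright
  · refine (lineCover_of_le (a := 0) hk (by rw [bar]; omega) fun i hi => ?_).symm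
    rw [projIcc_of_le_left hM hi]
  · refine (lineCover_of_ge (b := M) hk hright fun i hi => ?_).symm
    rw [projIcc_of_right_le hM hi]
  · have hi_nonneg : 0 ≤ (j - k) / (2 * k + 1) := Int.ediv_nonneg (by omega) hK.le
    have hi_lt : (j - k) / (2 * k + 1) < M := by
      rw [Int.ediv_lt_iff_lt_mul hK]; linarith
    rw [lineCover, sum_comp_ediv hk fun i => α (projIcc 0 M hM i),
      projIcc_of_mem hM ⟨hi_nonneg, hi_lt.le⟩, projIcc_of_mem hM ⟨by omega, by omega⟩]
    funext c
    simp only [Int.fdiv_eq_ediv_of_nonneg _ hK.le, barPt, Pi.add_apply, Pi.smul_apply,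
      smul_eq_mul]
    ring

theorem cover_zero (hk : 0 ≤ k) (hM : 0 ≤ M) (α : ℤ → Fin n → ℤ) :
    cover k M α 0 = barPt k (α 0) := by
  rw [cover_eq_lineCover hk hM]
  exact lineCover_of_le (a := 0) hk (by rw [bar]; omega) fun i hi => by
    rw [projIcc_of_le_left hM hi]

theorem cover_last (hk : 0 ≤ k) (hM : 0 ≤ M) (α : ℤ → Fin n → ℤ) :
    cover k M α ((2 * k + 1) * M + 2 * k) = barPt k (α M) := by
  rw [cover_eq_lineCover hk hM]
  exact lineCover_of_ge (b := M) hk (by rw [bar]; omega) fun i hi => by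
    rw [projIcc_of_right_le hM hi]

theorem dist_lineCover_le {ι : Type*} [Fintype ι] {m : ℤ} (hk : 0 ≤ k)
    {f g : ℤ → ι → ℤ} (hfg : ∀ i i', dist (f i) (g i') ≤ (max |i - i'| m : ℤ)) (j j' : ℤ) :
    dist (lineCover k f j) (lineCover k g j') ≤ (max |j - j'| ((2 * k + 1) * m) : ℤ) := by
  calc dist (lineCover k f j) (lineCover k g j')
      ≤ ∑ r ∈ Finset.Icc (-k) k,
          dist (f ((j + r) / (2 * k + 1))) (g ((j' + r) / (2 * k + 1))) := by
        rw [lineCover, lineCover, dist_add_right]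
        exact dist_sum_sum_le _ _ _
    _ ≤ ∑ r ∈ Finset.Icc (-k) k,
          ((max |(j + r) / (2 * k + 1) - (j' + r) / (2 * k + 1)| m : ℤ) : ℝ) :=
        Finset.sum_le_sum fun r _ => hfg _ _
    _ ≤ _ := by exact_mod_cast sum_max_abs_sub_ediv_le hk j j' m

theorem mem_subdiv_of_dist_barPt_le {x y : Fin n → ℤ} (hk : 0 ≤ k) (hy : y ∈ Y)
    (hxy : dist x (barPt k y) ≤ k) : x ∈ Subdiv Y (2 * k + 1) := by
  have hK : 0 < 2 * k + 1 := by omega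
  have hfloor : (fun i => (x i).fdiv (2 * k + 1)) = y := by
    funext i
    have hi : |x i - barPt k y i| ≤ k := by
      have := (dist_le_pi_dist x (barPt k y) i).trans hxy
      rw [Int.dist_eq] at this
      exact_mod_cast this
    rw [barPt, abs_le] at hi
    rw [Int.fdiv_eq_ediv_of_nonneg _ hK.le, Int.ediv_eq_iff_of_pos hK]
    constructor <;> linarith
  rw [Subdiv, mem_ofPred_eq, hfloor]
  exact hy

theorem dist_lineCover_rows_le {ι : Type*} [Fintype ι] (hk : 0 ≤ k) {G : ℤ × ℤ → ι → ℤ}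
    (hG : LipschitzWith 1 G) (j j' T T' : ℤ) :
    dist (lineCover k (fun i => G (i, T)) j) (lineCover k (fun i => G (i, T')) j') ≤
      (max |j - j'| ((2 * k + 1) * |T - T'|) : ℤ) := by
  refine dist_lineCover_le hk (fun i i' => ?_) j j'
  simpa only [dist_eq_intCast_max, NNReal.coe_one, one_mul] using hG.dist_le_mul (i, T) (i', T')

theorem lipschitzOnWith_lineCover_rows {ι : Type*} [Fintype ι] (hk : 0 ≤ k)
    {G : ℤ × ℤ → ι → ℤ} (hG : LipschitzWith 1 G) :
    LipschitzOnWith 1 (fun p : ℤ × ℤ => lineCover k (fun i => G (i, p.2 / (2 * k + 1))) p.1)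
      {p | 2 * k + 1 ∣ p.2 ∨
        ∀ T T', lineCover k (fun i => G (i, T)) p.1 = lineCover k (fun i => G (i, T')) p.1} := by
  have hK : 0 < 2 * k + 1 := by omega
  have hrow (T : ℤ) (p q : ℤ × ℤ) :
      dist (lineCover k (fun i => G (i, T)) p.1) (lineCover k (fun i => G (i, T)) q.1) ≤
        (max |p.1 - q.1| |p.2 - q.2| : ℤ) := by
    refine (dist_lineCover_rows_le hk hG p.1 q.1 T T).trans (Int.cast_le.mpr ?_)
    rw [sub_self, abs_zero, mul_zero, max_eq_left (abs_nonneg _)]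
    exact le_max_left _ _
  refine LipschitzOnWith.of_dist_le_mul fun p hp q hq => ?_
  rw [NNReal.coe_one, one_mul, dist_eq_intCast_max]
  rcases hp with hp | hp
  · rcases hq with hq | hq
    · convert dist_lineCover_rows_le hk hG p.1 q.1 (p.2 / (2 * k + 1)) (q.2 / (2 * k + 1)) using 3
      rw [← abs_of_pos hK, ← abs_mul, abs_of_pos hK, mul_sub, Int.mul_ediv_cancel' hp,
        Int.mul_ediv_cancel' hq]
    · rw [hq (q.2 / (2 * k + 1)) (p.2 / (2 * k + 1))]
      exact hrow _ p q
  · rw [hp (p.2 / (2 * k + 1)) (q.2 / (2 * k + 1))]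
    exact hrow _ p q

theorem exists_lipschitzWith_extend_lineCover {ι : Type*} [Fintype ι] (hk : 0 ≤ k)
    {G : ℤ × ℤ → ι → ℤ} (hG : LipschitzWith 1 G) :
    ∃ F : ℤ × ℤ → ι → ℤ, LipschitzWith 1 F ∧
      (∀ j T, F (j, (2 * k + 1) * T) = lineCover k (fun i => G (i, T)) j) ∧
      ∀ j y, (∀ T, lineCover k (fun i => G (i, T)) j = y) → ∀ s, F (j, s) = y := by
  obtain ⟨F, hF, hF_eq⟩ := exists_lipschitzWith_eqOn_of_int_dist
    (fun p q => ⟨_, dist_eq_intCast_max p q⟩) (lipschitzOnWith_lineCover_rows hk hG)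
  refine ⟨F, hF, fun j T => ?_, fun j y hy s => ?_⟩
  · rw [← hF_eq (Or.inl (dvd_mul_right _ T))]
    beta_reduce
    rw [Int.mul_ediv_cancel_left _ (by omega)]
  · rw [← hF_eq (Or.inr fun T T' => (hy T).trans (hy T').symm)]
    exact hy _

theorem mem_subdiv_of_lipschitzWith (hk : 0 ≤ k) {F G : ℤ × ℤ → Fin n → ℤ}
    (hF : LipschitzWith 1 F) (hG : ∀ p, G p ∈ Y)
    (hFG : ∀ i T, F (bar k i, (2 * k + 1) * T) = barPt k (G (i, T))) (p : ℤ × ℤ) :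
    F p ∈ Subdiv Y (2 * k + 1) := by
  have hK : 0 < 2 * k + 1 := by omega
  set i := p.1 / (2 * k + 1)
  set T := (p.2 + k) / (2 * k + 1)
  have hcentre : dist p (bar k i, (2 * k + 1) * T) ≤ k := by
    have hi := Int.ediv_eq_iff_of_pos hK |>.mp (rfl : _ = i)
    have hT := Int.ediv_eq_iff_of_pos hK |>.mp (rfl : _ = T)
    rw [dist_le_intCast_iff, bar, abs_le, abs_le]
    refine ⟨⟨?_, ?_⟩, ?_, ?_⟩ <;> linarith
  refine mem_subdiv_of_dist_barPt_le hk (hG (i, T)) ?_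
  rw [← hFG]
  simpa using (hF.dist_le_mul p _).trans (by simpa using hcentre)

theorem HomotopicRel.exists_lipschitzWith_plane (hM : 0 ≤ M) {α β : ℤ → Fin n → ℤ}
    {y₀ yM : Fin n → ℤ} (h : HomotopicRel M Y y₀ yM α β) :
    ∃ N : ℤ, 1 ≤ N ∧ ∃ G : ℤ × ℤ → Fin n → ℤ, LipschitzWith 1 G ∧ (∀ p, G p ∈ Y) ∧
      (∀ i, G (i, 0) = α (projIcc 0 M hM i)) ∧ (∀ i, G (i, N) = β (projIcc 0 M hM i)) ∧
      (∀ T, ∀ i ≤ 0, G (i, T) = y₀) ∧ (∀ T, ∀ i ≥ M, G (i, T) = yM) := by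
  obtain ⟨N, hN, H, hmaps, hcont, hbot, htop, hleft, hright⟩ := h
  have hN₀ : 0 ≤ N := by omega
  refine ⟨N, hN, fun p => H (projIcc 0 M hM p.1) (projIcc 0 N hN₀ p.2), ?_,
    fun p => hmaps _ (projIcc 0 M hM p.1).2 _ (projIcc 0 N hN₀ p.2).2,
    fun i => ?_, fun i => ?_, fun T i hi => ?_, fun T i hi => ?_⟩
  · refine lipschitzWith_one_of_dist_le_one fun p q hpq => adj_iff_dist_le_one.mp ?_
    rw [← Int.cast_one, dist_le_intCast_iff] at hpq
    exact hcont _ (Subtype.prop _) _ (Subtype.prop _) _ (Subtype.prop _) _ (Subtype.prop _)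
      ((abs_projIcc_sub_projIcc hM).trans hpq.1) ((abs_projIcc_sub_projIcc hN₀).trans hpq.2)
  · beta_reduce
    rw [projIcc_of_le_left hN₀ le_rfl]
    exact hbot _ (Subtype.prop _)
  · beta_reduce
    rw [projIcc_of_right_le hN₀ le_rfl]
    exact htop _ (Subtype.prop _)
  · beta_reduce
    rw [projIcc_of_le_left hM hi]
    exact hleft _ (Subtype.prop _)
  · beta_reduce
    rw [projIcc_of_right_le hM hi]
    exact hright _ (Subtype.prop _)

theorem HomotopicRel.cover (hM : 0 ≤ M) (hk : 0 ≤ k)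
    {α β : ℤ → Fin n → ℤ} {y₀ yM : Fin n → ℤ} (h : HomotopicRel M Y y₀ yM α β) :
    HomotopicRel ((2 * k + 1) * M + 2 * k) (Subdiv Y (2 * k + 1))
      (barPt k y₀) (barPt k yM) (cover k M α) (cover k M β) := by
  obtain ⟨N, hN, G, hG, hGY, hbot, htop, hleft, hright⟩ := h.exists_lipschitzWith_plane hM
  obtain ⟨F, hF, hFrow, hFcol⟩ := exists_lipschitzWith_extend_lineCover hk hG
  refine ⟨(2 * k + 1) * N, by nlinarith, fun j s => F (j, s), fun j _ s _ => ?_,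
    fun j _ s _ j' _ s' _ hj hs => adj_iff_dist_le_one.mpr ?_, fun j _ => ?_, fun j _ => ?_,
    fun s _ => hFcol 0 _ (fun T => ?_) s, fun s _ => hFcol _ _ (fun T => ?_) s⟩
  · exact mem_subdiv_of_lipschitzWith hk hF hGY (fun i T => by rw [hFrow, lineCover_bar hk]) (j, s)
  · have hdist : dist (j, s) (j', s') ≤ (1 : ℤ) := dist_le_intCast_iff.mpr ⟨hj, hs⟩
    simpa using (hF.dist_le_mul (j, s) (j', s')).trans (by simpa using hdist)
  · simpa only [mul_zero, hbot, cover_eq_lineCover hk hM] using hFrow j 0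
  · simpa only [htop, cover_eq_lineCover hk hM] using hFrow j N
  · exact lineCover_of_le (a := 0) hk (by rw [bar]; omega) (hleft T)
  · exact lineCover_of_ge (b := M) hk (by rw [bar]; omega) (hright T)

end Cover

theorem covers_homotopic_rel_general {n : ℕ} (Y : Set (Fin n → ℤ))
    (M k : ℤ) (hM : 0 ≤ M) (hk : 0 ≤ k)
    (α β : ℤ → Fin n → ℤ) (y₀ yM : Fin n → ℤ)
    (hα0 : α 0 = y₀) (hβ0 : β 0 = y₀) (hαM : α M = yM) (hβM : β M = yM) :
    (cover k M α 0 = barPt k y₀ ∧ cover k M β 0 = barPt k y₀) ∧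
    (cover k M α ((2 * k + 1) * M + 2 * k) = barPt k yM ∧
      cover k M β ((2 * k + 1) * M + 2 * k) = barPt k yM) ∧
    (HomotopicRel M Y y₀ yM α β →
      HomotopicRel ((2 * k + 1) * M + 2 * k) (Subdiv Y (2 * k + 1))
        (barPt k y₀) (barPt k yM) (cover k M α) (cover k M β)) :=
  ⟨⟨hα0 ▸ cover_zero hk hM α, hβ0 ▸ cover_zero hk hM β⟩,
    ⟨hαM ▸ cover_last hk hM α, hβM ▸ cover_last hk hM β⟩, HomotopicRel.cover hM hk⟩

/-- if `α, β : I_M → Y` have the same endpoints `y₀, y_M`, then their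
standard covers have endpoints `ȳ₀, ȳ_M`, and if `α ≃ β` rel endpoints then
`α̂ ≃ β̂` rel endpoints (as maps `I_{(2k+1)M+2k} → S(Y, 2k+1)`). -/
theorem covers_homotopic_rel {n : ℕ} (Y : Set (Fin n → ℤ)) (hY : Y.Finite)
    (M k : ℤ) (hM : 1 ≤ M) (hk : 1 ≤ k)
    (α β : ℤ → Fin n → ℤ) (y₀ yM : Fin n → ℤ)
    (hαmaps : ∀ i ∈ Icc (0 : ℤ) M, α i ∈ Y)
    (hαcont : ∀ i ∈ Icc (0 : ℤ) M, ∀ i' ∈ Icc (0 : ℤ) M, |i - i'| ≤ 1 → adj (α i) (α i'))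
    (hβmaps : ∀ i ∈ Icc (0 : ℤ) M, β i ∈ Y)
    (hβcont : ∀ i ∈ Icc (0 : ℤ) M, ∀ i' ∈ Icc (0 : ℤ) M, |i - i'| ≤ 1 → adj (β i) (β i'))
    (hα0 : α 0 = y₀) (hβ0 : β 0 = y₀) (hαM : α M = yM) (hβM : β M = yM) :
    (cover k M α 0 = barPt k y₀ ∧ cover k M β 0 = barPt k y₀) ∧
    (cover k M α ((2 * k + 1) * M + 2 * k) = barPt k yM ∧
      cover k M β ((2 * k + 1) * M + 2 * k) = barPt k yM) ∧
    (HomotopicRel M Y y₀ yM α β →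
      HomotopicRel ((2 * k + 1) * M + 2 * k) (Subdiv Y (2 * k + 1))
        (barPt k y₀) (barPt k yM) (cover k M α) (cover k M β)) := by
  exact covers_homotopic_rel_general Y M k (by omega) (by omega) α β y₀ yM hα0 hβ0 hαM hβM
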